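/- arXiv:2302.08608 — 11 statements merged into one kernel-verified Lean document; each statement's English description precedes it below -/
import Mathlib

section
/- For every integer k ≥ 1, N'_k = gcd(p_k, p_{k−1} + 1). -/
/-- With `A = !![a, b; c, d]` of determinant 1, trace `a + d > 2`,
`gcd(b, c) = 1`, `p` the recurrence sequence, and `N' k` the largest positive integer `N`
such that `A^k ≡ I (mod N)` entrywise, we have `N' k = gcd(p k, p (k-1) + 1)` for `k ≥ 1`. -/
theorem stmt3 (a b c d : ℤ) (hdet : a * d - b * c = 1) (htr : 2 < a + d)
    (hbc : Int.gcd b c = 1)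
    (p : ℕ → ℤ) (hp0 : p 0 = 0) (hp1 : p 1 = 1)
    (hrec : ∀ t : ℕ, 1 ≤ t → p (t + 1) = (a + d) * p t - p (t - 1))
    (N' : ℕ → ℕ)
    (hN' : ∀ k : ℕ, 1 ≤ k →
      IsGreatest {N : ℕ | 0 < N ∧ ∀ i j : Fin 2,
        (N : ℤ) ∣ (((!![a, b; c, d] : Matrix (Fin 2) (Fin 2) ℤ) ^ k - 1) i j)} (N' k)) :
    ∀ k : ℕ, 1 ≤ k → N' k = Int.gcd (p k) (p (k - 1) + 1) := by
  have hpow : ∀ k : ℕ, (!![a, b; c, d] : Matrix (Fin 2) (Fin 2) ℤ) ^ (k + 1)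
      = !![p (k+1) * a - p k, p (k+1) * b; p (k+1) * c, p (k+1) * d - p k] := by
    intro k
    induction k with
    | zero => simp [hp0, hp1]
    | succ k ih =>
      have h := hrec (k + 1) (by omega)
      simp only [Nat.add_sub_cancel] at h
      rw [pow_succ, ih, h, Matrix.mul_fin_two]
      congr 1
      ext i j
      fin_cases i <;> fin_cases j <;> simp
      · linear_combination (-p (k+1)) * hdet
      · ring
      · ring
      · linear_combination (-p (k+1)) * hdet
  intro k hk
  obtain ⟨k, rfl⟩ : ∃ m, k = m + 1 := ⟨k - 1, by omega⟩
  have hset := hN' (k + 1) hk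
  simp only [Nat.add_sub_cancel]
  have key : ∀ N : ℕ, (∀ i j : Fin 2,
        (N : ℤ) ∣ (((!![a, b; c, d] : Matrix (Fin 2) (Fin 2) ℤ) ^ (k + 1) - 1) i j)) ↔
        N ∣ Int.gcd (p (k + 1)) (p k + 1) := by
    intro N
    rw [hpow, Int.dvd_gcd_iff]
    simp only [Fin.forall_fin_two]
    simp
    constructor
    · rintro ⟨⟨h1, h2⟩, h3, h4⟩
      have hb : (N : ℤ) ∣ p (k + 1) := by
        have hc : IsCoprime b c := Int.isCoprime_iff_gcd_eq_one.mpr hbc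
        obtain ⟨u, v, huv⟩ := hc
        have : p (k + 1) = u * (p (k + 1) * b) + v * (p (k + 1) * c) := by
          linear_combination (-p (k + 1)) * huv
        rw [this]
        exact dvd_add (Dvd.dvd.mul_left h2 _) (Dvd.dvd.mul_left h3 _)
      refine ⟨hb, ?_⟩
      have := dvd_sub (Dvd.dvd.mul_right hb a) h1
      rwa [show p (k + 1) * a - (p (k + 1) * a - p k - 1) = p k + 1 by ring] at this
    · rintro ⟨h1, h2⟩
      refine ⟨⟨?_, Dvd.dvd.mul_right h1 _⟩, Dvd.dvd.mul_right h1 _, ?_⟩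
      · rw [show p (k + 1) * a - p k - 1 = p (k + 1) * a - (p k + 1) by ring]
        exact dvd_sub (Dvd.dvd.mul_right h1 a) h2
      · rw [show p (k + 1) * d - p k - 1 = p (k + 1) * d - (p k + 1) by ring]
        exact dvd_sub (Dvd.dvd.mul_right h1 d) h2
  obtain ⟨⟨hpos, hmem⟩, hub⟩ := hset
  have hdvd := (key _).1 hmem
  have hg : 0 < Int.gcd (p (k + 1)) (p k + 1) := by
    rcases Nat.eq_zero_or_pos (Int.gcd (p (k + 1)) (p k + 1)) with h0 | h0
    · have := hub ⟨Nat.succ_pos (N' (k + 1)), (key _).2 (by rw [h0]; exact dvd_zero _)⟩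
      omega
    · exact h0
  exact le_antisymm (Nat.le_of_dvd hg hdvd) (hub ⟨hg, (key _).2 dvd_rfl⟩)
end

section
/- For all integers k ≥ 1 and 0 ≤ s ≤ k − 1, gcd(p_k, p_{k−1} + 1) = gcd(p_{k−s} + p_s, p_{k−(s+1)} + p_{s+1}). -/
theorem gcd_step_aux (a b c τ : ℤ) (h : c = τ * b - a) : Int.gcd a b = Int.gcd b c := by
  subst h
  apply Nat.dvd_antisymm
  · apply Int.dvd_gcd
    · exact Int.gcd_dvd_right _ _
    · exact dvd_sub (Dvd.dvd.mul_left (Int.gcd_dvd_right _ _) _) (Int.gcd_dvd_left _ _)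
  · apply Int.dvd_gcd
    · have h1 := Int.gcd_dvd_left b (τ * b - a)
      have h2 := Int.gcd_dvd_right b (τ * b - a)
      have h3 := dvd_sub (Dvd.dvd.mul_left h1 τ) h2
      simpa using h3
    · exact Int.gcd_dvd_left _ _

/-- Let `τ` be an integer and `p 0 = 0`, `p 1 = 1`,
`p (t+1) = τ * p t - p (t-1)` for `t ≥ 1`. Then for all `k ≥ 1` and `0 ≤ s ≤ k - 1`,
`gcd(p k, p (k-1) + 1) = gcd(p (k-s) + p s, p (k-(s+1)) + p (s+1))`. -/
theorem stmt4 (τ : ℤ) (p : ℕ → ℤ) (hp0 : p 0 = 0) (hp1 : p 1 = 1)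
    (hrec : ∀ t : ℕ, 1 ≤ t → p (t + 1) = τ * p t - p (t - 1)) :
    ∀ k s : ℕ, 1 ≤ k → s ≤ k - 1 →
      Int.gcd (p k) (p (k - 1) + 1)
        = Int.gcd (p (k - s) + p s) (p (k - (s + 1)) + p (s + 1)) := by
  intro k s hk
  induction s with
  | zero => intro _; simp [hp0, hp1]
  | succ s ih =>
    intro hs
    rw [ih (by omega)]
    obtain ⟨m, rfl⟩ : ∃ m, k = m + s + 2 := ⟨k - s - 2, by omega⟩
    have e0 : m + s + 2 - s = m + 2 := by omega
    have e1 : m + s + 2 - (s + 1) = m + 1 := by omega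
    have e2 : m + s + 2 - (s + 1 + 1) = m := by omega
    rw [e0, e1, e2]
    apply gcd_step_aux _ _ _ τ
    have r1 := hrec (m + 1) (by omega)
    have r2 := hrec (s + 1) (by omega)
    simp only [Nat.add_sub_cancel, add_assoc, Nat.reduceAdd] at r1 r2 ⊢
    linarith
end

section
/- For every integer k ≥ 1, N'_{2k} = 2·p_k. -/
/-- With `A = !![a, b; c, d]` of determinant 1, trace `a + d` even and `> 2`,
`gcd(b, c) = 1`, `p` the recurrence sequence, and `N' k` the largest positive integer `N`
such that `A^k ≡ I (mod N)` entrywise, we have `N' (2k) = 2 * p k` for every `k ≥ 1`. -/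
theorem stmt5 (a b c d : ℤ) (hdet : a * d - b * c = 1)
    (heven : Even (a + d)) (htr : 2 < a + d) (hbc : Int.gcd b c = 1)
    (p : ℕ → ℤ) (hp0 : p 0 = 0) (hp1 : p 1 = 1)
    (hrec : ∀ t : ℕ, 1 ≤ t → p (t + 1) = (a + d) * p t - p (t - 1))
    (N' : ℕ → ℕ)
    (hN' : ∀ k : ℕ, 1 ≤ k →
      IsGreatest {N : ℕ | 0 < N ∧ ∀ i j : Fin 2,
        (N : ℤ) ∣ (((!![a, b; c, d] : Matrix (Fin 2) (Fin 2) ℤ) ^ k - 1) i j)} (N' k)) :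
    ∀ k : ℕ, 1 ≤ k → (N' (2 * k) : ℤ) = 2 * p k := by
  have hpos : ∀ n : ℕ, 0 ≤ p n ∧ p n < p (n + 1) := by
    intro n
    induction n with
    | zero => simp [hp0, hp1]
    | succ n ih =>
      have h := hrec (n + 1) (by omega)
      simp only [Nat.add_sub_cancel] at h
      refine ⟨by linarith [ih.1, ih.2], ?_⟩
      rw [h]
      nlinarith [ih.1, ih.2]
  have hpow : ∀ n : ℕ, (!![a, b; c, d] : Matrix (Fin 2) (Fin 2) ℤ) ^ (n + 1) =
      !![p (n + 1) * a - p n, p (n + 1) * b; p (n + 1) * c, p (n + 1) * d - p n] := by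
    intro n
    induction n with
    | zero => simp [hp0, hp1]
    | succ n ih =>
      have h := hrec (n + 1) (by omega)
      simp only [Nat.add_sub_cancel] at h
      rw [pow_succ, ih, h]
      ext i j
      fin_cases i <;> fin_cases j <;> simp [Matrix.mul_apply, Fin.sum_univ_two]
      · linear_combination (-p (n + 1)) * hdet
      · ring
      · ring
      · linear_combination (-p (n + 1)) * hdet
  intro k hk
  obtain ⟨n, rfl⟩ : ∃ n, k = n + 1 := ⟨k - 1, by omega⟩
  have hq : 0 < p (n + 1) := by linarith [(hpos n).1, (hpos n).2]
  have hD : (p (n + 1) * a - p n) * (p (n + 1) * d - p n)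
      - (p (n + 1) * b) * (p (n + 1) * c) = 1 := by
    have h := congrArg Matrix.det (hpow n)
    rw [Matrix.det_pow, Matrix.det_fin_two_of, Matrix.det_fin_two_of, hdet, one_pow] at h
    exact h.symm
  have hG := hN' (2 * (n + 1)) (by omega)
  rw [two_mul, pow_add, hpow n, ← two_mul] at hG
  generalize p (n + 1) = q at *
  generalize p n = r at *
  obtain ⟨e, he⟩ := heven
  obtain ⟨⟨hN0, hN⟩, hub⟩ := hG
  generalize N' (2 * (n + 1)) = N at *
  apply le_antisymm
  · have h00 := hN 0 0
    have h01 := hN 0 1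
    have h10 := hN 1 0
    have h11 := hN 1 1
    simp [Matrix.mul_apply, Fin.sum_univ_two] at h00 h01 h10 h11
    have hb : (N : ℤ) ∣ 2 * q * b := by
      obtain ⟨u, hu⟩ := h01
      obtain ⟨v, hv⟩ := h11
      exact ⟨(q * d - r) * u - q * b * v, by
        linear_combination (q * d - r) * hu - q * b * hv - q * b * hD⟩
    have hc : (N : ℤ) ∣ 2 * q * c := by
      obtain ⟨u, hu⟩ := h10
      obtain ⟨v, hv⟩ := h00
      exact ⟨(q * a - r) * u - q * c * v, by
        linear_combination (q * a - r) * hu - q * c * hv - q * c * hD⟩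
    have hbez := Int.gcd_eq_gcd_ab b c
    rw [hbc] at hbez
    have : (N : ℤ) ∣ 2 * q := by
      obtain ⟨u, hu⟩ := hb
      obtain ⟨v, hv⟩ := hc
      push_cast at hbez
      exact ⟨u * Int.gcdA b c + v * Int.gcdB b c, by
        linear_combination (2 * q) * hbez + Int.gcdA b c * hu + Int.gcdB b c * hv⟩
    exact Int.le_of_dvd (by linarith) this
  · have hm : (2 * q).toNat ∈ {N : ℕ | 0 < N ∧ ∀ i j : Fin 2,
        (N : ℤ) ∣ ((!![q * a - r, q * b; q * c, q * d - r] *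
          !![q * a - r, q * b; q * c, q * d - r] - 1 : Matrix (Fin 2) (Fin 2) ℤ) i j)} := by
      refine ⟨by omega, ?_⟩
      rw [Int.toNat_of_nonneg (by linarith)]
      have hd : d = 2 * e - a := by linarith
      intro i j
      fin_cases i <;> fin_cases j <;> simp [Matrix.mul_apply, Fin.sum_univ_two]
      · refine ⟨(q * a - r) * (a - e) + q * b * c, ?_⟩
        subst hd
        linear_combination hD
      · refine ⟨b * (q * e - r), ?_⟩
        subst hd
        ring
      · refine ⟨c * (q * e - r), ?_⟩
        subst hd
        ring
      · refine ⟨(q * d - r) * (d - e) + q * b * c, ?_⟩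
        have ha : a = 2 * e - d := by linarith
        clear hd
        subst ha
        linear_combination hD
    have := hub hm
    omega
end

section
/- For every integer k ≥ 0, N'_{2k+1} = p_k + p_{k+1}. -/
/-- With `A = !![a, b; c, d]` of determinant 1, trace `a + d` even and `> 2`,
`gcd(b, c) = 1`, `p` the recurrence sequence, and `N' k` the largest positive integer `N`
such that `A^k ≡ I (mod N)` entrywise, we have `N' (2k+1) = p k + p (k+1)` for every `k ≥ 0`. -/
theorem stmt6 (a b c d : ℤ) (hdet : a * d - b * c = 1)
    (heven : Even (a + d)) (htr : 2 < a + d) (hbc : Int.gcd b c = 1)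
    (p : ℕ → ℤ) (hp0 : p 0 = 0) (hp1 : p 1 = 1)
    (hrec : ∀ t : ℕ, 1 ≤ t → p (t + 1) = (a + d) * p t - p (t - 1))
    (N' : ℕ → ℕ)
    (hN' : ∀ k : ℕ, 1 ≤ k →
      IsGreatest {N : ℕ | 0 < N ∧ ∀ i j : Fin 2,
        (N : ℤ) ∣ (((!![a, b; c, d] : Matrix (Fin 2) (Fin 2) ℤ) ^ k - 1) i j)} (N' k)) :
    ∀ k : ℕ, (N' (2 * k + 1) : ℤ) = p k + p (k + 1) := by
  have hr : ∀ t : ℕ, p (t + 2) = (a + d) * p (t + 1) - p t := fun t => by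
    simpa using hrec (t + 1) (by omega)
  have hpos : ∀ k : ℕ, 0 ≤ p k ∧ p k < p (k + 1) := by
    intro k
    induction k with
    | zero => simp [hp0, hp1]
    | succ k ih =>
      obtain ⟨h1, h2⟩ := ih
      refine ⟨by linarith, ?_⟩
      rw [show k + 1 + 1 = k + 2 from rfl, hr k]
      nlinarith
  have hinv : ∀ k : ℕ, p (k + 1) ^ 2 - (a + d) * p k * p (k + 1) + p k ^ 2 = 1 := by
    intro k
    induction k with
    | zero => simp [hp0, hp1]
    | succ k ih =>
      rw [show k + 1 + 1 = k + 2 from rfl, hr k]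
      linear_combination ih
  have hcop : ∀ k : ℕ, IsCoprime (p (k + 1) - p k) (p k - (a + d) * p k + p (k + 1)) := by
    intro k
    induction k with
    | zero => simpa [hp0, hp1] using isCoprime_one_left
    | succ k ih =>
      obtain ⟨m, n, h⟩ := ih
      refine ⟨-n, m + n * (a + d), ?_⟩
      rw [show k + 1 + 1 = k + 2 from rfl, hr k]
      linear_combination h
  have hpow : ∀ k : ℕ, (!![a, b; c, d] : Matrix (Fin 2) (Fin 2) ℤ) ^ (2 * k + 1) =
      !![(p (k + 1) ^ 2 - p k ^ 2) * a - (2 * p k * p (k + 1) - (a + d) * p k ^ 2),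
         (p (k + 1) ^ 2 - p k ^ 2) * b;
         (p (k + 1) ^ 2 - p k ^ 2) * c,
         (p (k + 1) ^ 2 - p k ^ 2) * d - (2 * p k * p (k + 1) - (a + d) * p k ^ 2)] := by
    intro k
    induction k with
    | zero => simp [hp0, hp1]
    | succ k ih =>
      have h2 : (!![a, b; c, d] : Matrix (Fin 2) (Fin 2) ℤ) ^ 2 =
          !![(a + d) * a - 1, (a + d) * b; (a + d) * c, (a + d) * d - 1] := by
        rw [pow_two, Matrix.mul_fin_two]
        congr 1
        ext i j
        fin_cases i <;> fin_cases j <;> simp <;> linarith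
      rw [show 2 * (k + 1) + 1 = (2 * k + 1) + 2 by ring, pow_add, ih, h2,
        show k + 1 + 1 = k + 2 from rfl, hr k, Matrix.mul_fin_two]
      generalize p k = x
      generalize p (k + 1) = y
      have hbc' : b * c = a * d - 1 := by linarith
      ext i j
      fin_cases i <;> fin_cases j <;> simp
      · linear_combination ((y ^ 2 - x ^ 2) * (a + d)) * hbc'
      · ring
      · ring
      · linear_combination ((y ^ 2 - x ^ 2) * (a + d)) * hbc'
  intro k
  obtain ⟨⟨hNpos, hNd⟩, hmax⟩ := hN' (2 * k + 1) (by omega)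
  rw [hpow k] at hNd hmax
  have hi := hinv k
  obtain ⟨h0, h1⟩ := hpos k
  obtain ⟨m, n, hmn⟩ := hcop k
  obtain ⟨r, s, hrs⟩ := Int.isCoprime_iff_gcd_eq_one.mpr hbc
  generalize p k = x at *
  generalize p (k + 1) = y at *
  apply le_antisymm
  · have e00 := hNd 0 0
    have e01 := hNd 0 1
    have e10 := hNd 1 0
    simp at e00 e01 e10
    have hP : (N' (2 * k + 1) : ℤ) ∣ y ^ 2 - x ^ 2 := by
      have := dvd_add (e01.mul_left r) (e10.mul_left s)
      refine this.trans (dvd_of_eq ?_)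
      linear_combination (y ^ 2 - x ^ 2) * hrs
    apply Int.le_of_dvd (by linarith)
    have := dvd_add (hP.mul_left (m + n * a)) (e00.mul_left (-n))
    refine this.trans (dvd_of_eq ?_)
    linear_combination (x + y) * hmn - n * hi
  · have : (x + y).toNat ≤ N' (2 * k + 1) := by
      apply hmax
      refine ⟨by omega, ?_⟩
      rw [Int.toNat_of_nonneg (by linarith)]
      intro i j
      fin_cases i <;> fin_cases j <;> simp
      · exact ⟨(y - x) * a - (x - (a + d) * x + y), by linear_combination hi⟩
      · exact ⟨(y - x) * b, by ring⟩
      · exact ⟨(y - x) * c, by ring⟩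
      · exact ⟨(y - x) * d - (x - (a + d) * x + y), by linear_combination hi⟩
    omega
end

section
/- The sequence (N'_k)_{k≥1} is nondecreasing: N'_k ≤ N'_{k+1} for all k ≥ 1. -/
def lucU (t : ℤ) : ℕ → ℤ
  | 0 => 0
  | 1 => 1
  | (n+2) => t * lucU t (n+1) - lucU t n

lemma lucU_mono (t : ℤ) (ht : 2 < t) (n : ℕ) : 0 ≤ lucU t n ∧ lucU t n < lucU t (n+1) := by
  induction n with
  | zero => simp [lucU]
  | succ n ih =>
    obtain ⟨h1, h2⟩ := ih
    refine ⟨by linarith, ?_⟩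
    rw [lucU]
    nlinarith

lemma pow_lucU (t : ℤ) (A B : Matrix (Fin 2) (Fin 2) ℤ) (hAB : A * B = 1) (hs : A + B = t • 1)
    (n : ℕ) : A ^ n = lucU t (n+1) • 1 - lucU t n • B := by
  induction n with
  | zero => simp [lucU]
  | succ n ih =>
    have hA : A = t • 1 - B := by rw [← hs]; simp
    rw [pow_succ', ih, mul_sub, mul_smul_comm, mul_smul_comm, hAB, lucU, mul_one]
    nth_rewrite 1 [hA]
    rw [smul_sub, sub_smul, smul_smul, mul_comm t]
    abel

lemma great_eq (M X P Q : Matrix (Fin 2) (Fin 2) ℤ) (e : ℤ) (n : ℕ) (he : 0 < e)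
    (hX : Int.gcd (X 0 1) (X 1 0) = 1) (h1 : M = P * (e • X)) (h2 : Q * M = e • X)
    (h : IsGreatest {N : ℕ | 0 < N ∧ ∀ i j : Fin 2, (N : ℤ) ∣ M i j} n) : (n : ℤ) = e := by
  obtain ⟨⟨hn, hd⟩, hu⟩ := h
  apply le_antisymm
  · apply Int.le_of_dvd he
    have key : ∀ i j, (n : ℤ) ∣ e * X i j := by
      intro i j
      have : e * X i j = (Q * M) i j := by rw [h2]; simp
      rw [this, Matrix.mul_apply]
      exact Finset.dvd_sum fun k _ => Dvd.dvd.mul_left (hd k j) _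
    have := Int.dvd_coe_gcd (key 0 1) (key 1 0)
    rw [Int.gcd_mul_left, hX] at this
    simpa using this
  · have : e.toNat ≤ n := by
      apply hu
      refine ⟨by omega, fun i j => ?_⟩
      rw [Int.toNat_of_nonneg he.le, h1, Matrix.mul_apply]
      refine Finset.dvd_sum fun k _ => Dvd.dvd.mul_left ?_ _
      simp
    omega

/-- With `A = !![a, b; c, d]` of determinant 1, trace `a + d` even and `> 2`,
`gcd(b, c) = 1`, and `N' k` the largest positive integer `N` such that `A^k ≡ I (mod N)`
entrywise, the sequence `N'` is nondecreasing: `N' k ≤ N' (k+1)` for all `k ≥ 1`. -/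
theorem stmt7 (a b c d : ℤ) (hdet : a * d - b * c = 1)
    (heven : Even (a + d)) (htr : 2 < a + d) (hbc : Int.gcd b c = 1)
    (N' : ℕ → ℕ)
    (hN' : ∀ k : ℕ, 1 ≤ k →
      IsGreatest {N : ℕ | 0 < N ∧ ∀ i j : Fin 2,
        (N : ℤ) ∣ (((!![a, b; c, d] : Matrix (Fin 2) (Fin 2) ℤ) ^ k - 1) i j)} (N' k)) :
    ∀ k : ℕ, 1 ≤ k → N' k ≤ N' (k + 1) := by
  obtain ⟨s, hs⟩ := heven
  obtain ⟨A, hA⟩ : ∃ A : Matrix (Fin 2) (Fin 2) ℤ, A = !![a, b; c, d] := ⟨_, rfl⟩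
  obtain ⟨B, hB⟩ : ∃ B : Matrix (Fin 2) (Fin 2) ℤ, B = !![d, -b; -c, a] := ⟨_, rfl⟩
  rw [← hA] at hN'
  have hAB : A * B = 1 := by
    rw [hA, hB, Matrix.mul_fin_two, Matrix.one_fin_two]
    congr! 4 <;> simp <;> linarith
  have hBA : B * A = 1 := mul_eq_one_comm.mp hAB
  have hsum : A + B = (a + d) • 1 := by
    rw [hA, hB]
    ext i j
    fin_cases i <;> fin_cases j <;> simp [add_comm]
  have hpA := pow_lucU (a + d) A B hAB hsum
  have hpB := pow_lucU (a + d) B A hBA (by rw [add_comm, hsum])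
  have hcomm : Commute A B := by rw [Commute, SemiconjBy, hAB, hBA]
  have hABn : ∀ n, A ^ n * B ^ n = 1 := fun n => by rw [← hcomm.mul_pow, hAB, one_pow]
  have hBAn : ∀ n, B ^ n * A ^ n = 1 := fun n => by rw [← hcomm.symm.mul_pow, hBA, one_pow]
  have hmono := lucU_mono (a + d) htr
  have hE : ∀ m, 1 ≤ m → (N' (2 * m) : ℤ) = 2 * lucU (a + d) m := by
    intro m hm
    have hf : A ^ m - B ^ m = (2 * lucU (a + d) m) • !![a - s, b; c, d - s] := by
      rw [hpA, hpB, hA, hB]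
      ext i j
      fin_cases i <;> fin_cases j <;> simp
      · linear_combination lucU (a + d) m * (-hs)
      · ring
      · ring
      · linear_combination lucU (a + d) m * (-hs)
    refine great_eq (A ^ (2 * m) - 1) !![a - s, b; c, d - s] (A ^ m) (B ^ m) _ _ ?_
      (by simpa using hbc) ?_ ?_ (hN' (2 * m) (by omega))
    · obtain ⟨k, rfl⟩ : ∃ k, m = k + 1 := ⟨m - 1, by omega⟩
      have := hmono k
      linarith
    · rw [← hf, mul_sub, hABn, two_mul, pow_add]
    · rw [← hf, mul_sub, two_mul, pow_add, ← mul_assoc, hBAn, one_mul, mul_one]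
  have hO : ∀ m, (N' (2 * m + 1) : ℤ) = lucU (a + d) m + lucU (a + d) (m + 1) := by
    intro m
    have hf : A ^ (m + 1) - B ^ m =
        (lucU (a + d) m + lucU (a + d) (m + 1)) • !![a - 1, b; c, d - 1] := by
      rw [hpA, hpB, hA, hB, lucU, Matrix.one_fin_two]
      ext i j
      fin_cases i <;> fin_cases j <;> simp [-Int.cast_add, -Int.cast_mul] <;> ring
    refine great_eq (A ^ (2 * m + 1) - 1) !![a - 1, b; c, d - 1] (A ^ m) (B ^ m) _ _ ?_
      (by simpa using hbc) ?_ ?_ (hN' (2 * m + 1) (by omega))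
    · have := hmono m
      linarith
    · rw [← hf, mul_sub, hABn, ← pow_add]
      congr 2
      ring
    · rw [← hf, mul_sub, two_mul, add_assoc, pow_add, ← mul_assoc, hBAn, one_mul, mul_one]
  intro k hk
  obtain ⟨m, hm | hm⟩ := Nat.even_or_odd' k
  · have h1 := hE m (by omega)
    have h2 := hO m
    have h3 := hmono m
    rw [hm]
    omega
  · have h1 := hO m
    have h2 := hE (m + 1) (by omega)
    have h3 := hmono m
    rw [hm]
    rw [show 2 * m + 1 + 1 = 2 * (m + 1) by ring]
    omega
end

section
/- For every integer k ≥ 1, T_{N'_k} = k; that is, the least positive integer t with A^t ≡ I (mod N'_k) is exactly k. -/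
def pS (t : ℤ) : ℕ → ℤ
  | 0 => 0
  | 1 => 1
  | n+2 => t * pS t (n+1) - pS t n

lemma pS_step (t : ℤ) (ht : 2 < t) (n : ℕ) : 0 ≤ pS t n ∧ pS t n < pS t (n+1) := by
  induction n with
  | zero => simp [pS]
  | succ n ih =>
    obtain ⟨h1, h2⟩ := ih
    refine ⟨by linarith, ?_⟩
    show _ < t * pS t (n+1) - pS t n
    nlinarith

lemma pS_mono (t : ℤ) (ht : 2 < t) : StrictMono (pS t) :=
  strictMono_nat_of_lt_succ fun n => (pS_step t ht n).2

abbrev M2 := Matrix (Fin 2) (Fin 2) ℤ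

lemma pow_formula (t : ℤ) (A : M2) (hA : A * A = t • A - 1) (n : ℕ) :
    A ^ (n+1) = pS t (n+1) • A - pS t n • (1 : M2) := by
  induction n with
  | zero => simp [pS]
  | succ n ih =>
    rw [pow_succ, ih, sub_mul, smul_mul_assoc, hA]
    show _ = (t * pS t (n+1) - pS t n) • A - _
    rw [smul_mul_assoc, one_mul]
    module

lemma div_iff (N : ℕ) (X : M2) : (∀ i j, (N:ℤ) ∣ X i j) ↔ ∃ Y : M2, X = (N:ℤ) • Y := by
  constructor
  · intro h
    choose Y hY using h
    exact ⟨Matrix.of Y, by ext i j; rw [Matrix.smul_apply, smul_eq_mul]; exact hY i j⟩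
  · rintro ⟨Y, rfl⟩ i j
    simp

/-- With `A = !![a, b; c, d]` of determinant 1, trace `a + d` even and `> 2`,
`gcd(b, c) = 1`, `N' k` the largest positive integer `N` such that `A^k ≡ I (mod N)`
entrywise, and `T N` the least positive integer `t` such that `A^t ≡ I (mod N)` entrywise,
we have `T (N' k) = k` for every `k ≥ 1`. -/
theorem stmt8 (a b c d : ℤ) (hdet : a * d - b * c = 1)
    (heven : Even (a + d)) (htr : 2 < a + d) (hbc : Int.gcd b c = 1)
    (N' : ℕ → ℕ)
    (hN' : ∀ k : ℕ, 1 ≤ k →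
      IsGreatest {N : ℕ | 0 < N ∧ ∀ i j : Fin 2,
        (N : ℤ) ∣ (((!![a, b; c, d] : Matrix (Fin 2) (Fin 2) ℤ) ^ k - 1) i j)} (N' k))
    (T : ℕ → ℕ)
    (hT : ∀ N : ℕ, 0 < N →
      IsLeast {t : ℕ | 0 < t ∧ ∀ i j : Fin 2,
        (N : ℤ) ∣ (((!![a, b; c, d] : Matrix (Fin 2) (Fin 2) ℤ) ^ t - 1) i j)} (T N)) :
    ∀ k : ℕ, 1 ≤ k → T (N' k) = k := by
  intro k hk
  set A : M2 := !![a, b; c, d] with hAd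
  set B : M2 := !![d, -b; -c, a] with hBd
  have hA : A * A = (a+d) • A - 1 := by
    ext i j; fin_cases i <;> fin_cases j <;> simp [A, Matrix.mul_apply, Fin.sum_univ_two] <;> linarith
  have hB : B * B = (a+d) • B - 1 := by
    ext i j; fin_cases i <;> fin_cases j <;> simp [B, Matrix.mul_apply, Fin.sum_univ_two] <;> linarith
  have hAB : A * B = 1 := by
    ext i j; fin_cases i <;> fin_cases j <;> simp [A, B, Matrix.mul_apply, Fin.sum_univ_two] <;> linarith
  have hBA : B * A = 1 := by
    ext i j; fin_cases i <;> fin_cases j <;> simp [A, B, Matrix.mul_apply, Fin.sum_univ_two] <;> linarith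
  have hBe : B = (a+d) • (1 : M2) - A := by
    ext i j; fin_cases i <;> fin_cases j <;> simp only [Matrix.sub_apply, Matrix.smul_apply] <;> simp [A, B]
  have hcom : Commute A B := by rw [Commute, SemiconjBy, hAB, hBA]
  have hABn : ∀ n, A ^ n * B ^ n = 1 := fun n => by rw [← hcom.mul_pow, hAB, one_pow]
  have hBAn : ∀ n, B ^ n * A ^ n = 1 := fun n => by rw [← hcom.symm.mul_pow, hBA, one_pow]
  set p := pS (a+d) with hp
  have hmono : StrictMono p := pS_mono _ htr
  have hp0 : p 0 = 0 := rfl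
  have hrec : ∀ n, p (n+2) = (a+d) * p (n+1) - p n := fun n => rfl
  have hAp : ∀ n, A ^ (n+1) = p (n+1) • A - p n • (1 : M2) := pow_formula _ A hA
  have hBp : ∀ n, B ^ (n+1) = p (n+1) • B - p n • (1 : M2) := pow_formula _ B hB
  have hnn : ∀ n, 0 ≤ p n := fun n => (pS_step _ htr n).1
  obtain ⟨m, hm⟩ := heven
  obtain ⟨⟨hNpos, hNdiv⟩, hNmax⟩ := hN' k hk
  obtain ⟨⟨hTpos, hTdiv⟩, hTmin⟩ := hT (N' k) hNpos
  have hle : T (N' k) ≤ k := hTmin ⟨hk, hNdiv⟩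
  rcases hle.eq_or_lt with h | hlt
  · exact h
  exfalso
  set t := T (N' k) with ht
  have h2 : t ≤ k - t := by
    apply hTmin
    refine ⟨by omega, (div_iff _ _).2 ?_⟩
    obtain ⟨Y, hY⟩ := (div_iff _ _).1 hNdiv
    obtain ⟨Z, hZ⟩ := (div_iff _ _).1 hTdiv
    refine ⟨B ^ t * (Y - Z), ?_⟩
    rw [← mul_smul_comm, smul_sub, ← hY, ← hZ]
    have : A ^ k = A ^ t * A ^ (k - t) := by rw [← pow_add]; congr 1; omega
    rw [this, sub_sub_sub_cancel_right, mul_sub, ← mul_assoc, hBAn, one_mul]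
  have hdvd : (N' k : ℤ) ∣ p t := by
    obtain ⟨s, hs⟩ : ∃ s, t = s + 1 := ⟨t - 1, by omega⟩
    rw [hs, hAp] at hTdiv
    have e1 := hTdiv 0 1
    have e2 := hTdiv 1 0
    simp only [Matrix.sub_apply, Matrix.smul_apply] at e1 e2
    simp [A] at e1 e2
    rw [← hs] at e1 e2
    have := Int.dvd_gcd e1 e2
    rw [Int.gcd_mul_left, hbc] at this
    exact Int.natCast_dvd.2 (by simpa using this)
  have hpt : 0 < p t := hp0 ▸ hmono hTpos
  have hNle : (N' k : ℤ) ≤ p t := Int.le_of_dvd hpt hdvd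
  have key : ∀ q : ℤ, 0 < q → ∀ Y : M2, A ^ k - 1 = q • Y → q ≤ N' k := by
    intro q hq Y hY
    lift q to ℕ using hq.le
    exact_mod_cast hNmax ⟨by exact_mod_cast hq, (div_iff _ _).2 ⟨Y, hY⟩⟩
  rcases Nat.even_or_odd' k with ⟨n, hn | hn⟩
  · have hle2 : p t ≤ p n := hmono.monotone (by omega)
    have := key (2 * p n) (by linarith) (A ^ n * (A - m • (1 : M2))) (by
      obtain ⟨s, hs⟩ : ∃ s, n = s + 1 := ⟨n - 1, by omega⟩
      have h1 : A ^ k - 1 = A ^ n * (A ^ n - B ^ n) := by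
        rw [mul_sub, hABn, ← pow_add, hn, two_mul]
      have h3 : A ^ n - B ^ n = (2 * p n) • (A - m • (1 : M2)) := by
        rw [hs, hAp, hBp, hBe, hm]
        module
      rw [h1, h3, mul_smul_comm])
    linarith
  · have hle2 : p t ≤ p n := hmono.monotone (by omega)
    have hlt2 : p n < p (n+1) := hmono (by omega)
    have := key (p n + p (n+1)) (by linarith) (A ^ n * (A - 1)) (by
      have h1 : A ^ k - 1 = A ^ n * (A ^ (n+1) - B ^ n) := by
        rw [mul_sub, hABn, ← pow_add, hn]; congr 2; ring
      have h3 : A ^ (n+1) - B ^ n = (p n + p (n+1)) • (A - 1) := by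
        cases n with
        | zero => simp [p, pS]
        | succ s =>
          rw [hAp, hBp, hBe, hrec]
          module
      rw [h1, h3, mul_smul_comm])
    linarith
end

section
/- For every integer k ≥ 0, p_k + p_{k+1} ≥ λ^k. -/
/-- With `A = !![a, b; c, d]` of determinant 1 and trace `a + d > 2`,
`p` the recurrence sequence, and `λ = ((a+d) + √((a+d)² - 4)) / 2 > 1` the largest
eigenvalue of `A`, we have `p k + p (k+1) ≥ λ^k` for every `k ≥ 0`. -/
theorem stmt10 (a b c d : ℤ) (hdet : a * d - b * c = 1) (htr : 2 < a + d)
    (p : ℕ → ℤ) (hp0 : p 0 = 0) (hp1 : p 1 = 1)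
    (hrec : ∀ t : ℕ, 1 ≤ t → p (t + 1) = (a + d) * p t - p (t - 1))
    (lam : ℝ)
    (hlam : lam = (((a : ℝ) + d) + Real.sqrt (((a : ℝ) + d) ^ 2 - 4)) / 2) :
    ∀ k : ℕ, lam ^ k ≤ ((p k + p (k + 1) : ℤ) : ℝ) := by
  have hT : (2 : ℝ) < (a : ℝ) + d := by exact_mod_cast htr
  have hr : ∀ k : ℕ, p (k + 2) = (a + d) * p (k + 1) - p k := fun k => by
    simpa using hrec (k + 1) (by omega)
  have hpos : ∀ k : ℕ, 0 ≤ p k ∧ p k ≤ p (k + 1) := by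
    intro k
    induction k with
    | zero => simp [hp0, hp1]
    | succ k ih =>
      obtain ⟨h0, h1⟩ := ih
      refine ⟨h0.trans h1, ?_⟩
      have := hr k
      show p (k + 1) ≤ p (k + 2)
      nlinarith
  have hs := Real.sq_sqrt (show (0 : ℝ) ≤ ((a : ℝ) + d) ^ 2 - 4 by nlinarith)
  have hs0 := Real.sqrt_nonneg (((a : ℝ) + d) ^ 2 - 4)
  set s := Real.sqrt (((a : ℝ) + d) ^ 2 - 4) with hsdef
  have hmul : lam * ((a : ℝ) + d - lam) = 1 := by
    rw [hlam]; linarith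
  have hmu : 0 ≤ (a : ℝ) + d - lam := by
    have h1 : 0 < lam := by rw [hlam]; linarith
    by_contra h
    push Not at h
    nlinarith
  have hid : ∀ k : ℕ, (p (k + 1) : ℝ) - ((a : ℝ) + d - lam) * p k = lam ^ k := by
    intro k
    induction k with
    | zero => simp [hp0, hp1]
    | succ k ih =>
      have h2 : (p (k + 2) : ℝ) = ((a : ℝ) + d) * p (k + 1) - p k := by
        exact_mod_cast hr k
      show (p (k + 2) : ℝ) - ((a : ℝ) + d - lam) * p (k + 1) = lam ^ (k + 1)
      rw [h2, pow_succ, ← ih]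
      linear_combination (p k : ℝ) * hmul
  intro k
  have h0 : (0 : ℝ) ≤ p k := by exact_mod_cast (hpos k).1
  have := mul_nonneg hmu h0
  rw [← hid k]
  push_cast
  linarith
end

section
/- There exists a strictly increasing sequence (N_k)_{k≥1} of odd positive integers tending to infinity such that for every k, T_{N_k} ≤ 2·(log N_k)/(log λ) + 1, where T_N denotes the least positive integer t with A^t ≡ I (mod N) entrywise. -/
def vseq (t : ℤ) : ℕ → ℤ
  | 0 => 1
  | 1 => t + 1
  | (k+2) => t * vseq t (k+1) - vseq t k

open Polynomial in
lemma vseq_poly (t : ℤ) (k : ℕ) :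
    (∃ Q : ℤ[X], (X:ℤ[X])^(2*k+1) - 1 = C (vseq t k) * (X^k * (X-1)) + (X^2 - C t * X + 1) * Q) ∧
    (∃ Q : ℤ[X], (X:ℤ[X])^(2*(k+1)+1) - 1
      = C (vseq t (k+1)) * (X^(k+1) * (X-1)) + (X^2 - C t * X + 1) * Q) := by
  induction k with
  | zero =>
    refine ⟨⟨0, by simp [vseq]⟩, ⟨X - 1, ?_⟩⟩
    simp only [vseq, C_add, C_1, zero_add]
    ring
  | succ k ih =>
    obtain ⟨⟨P, hP⟩, ⟨Q, hQ⟩⟩ := ih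
    refine ⟨⟨Q, hQ⟩, ⟨C t * X * Q - X^2 * P + X^(2*k+3) - 1, ?_⟩⟩
    simp only [vseq, C_sub, C_mul]
    linear_combination (C t * X) * hQ - X^2 * hP

lemma vseq_mat (t : ℤ) (A : Matrix (Fin 2) (Fin 2) ℤ) (hA : A^2 - t • A + 1 = 0) (k : ℕ) :
    A^(2*k+1) - 1 = vseq t k • (A^k * (A-1)) := by
  obtain ⟨Q, hQ⟩ := (vseq_poly t k).1
  have := congrArg (Polynomial.aeval A) hQ
  simp only [map_sub, map_pow, map_mul, map_add, map_one, Polynomial.aeval_X, Polynomial.aeval_C,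
    ← Algebra.smul_def, hA, zero_mul, add_zero] at this
  exact this

lemma vseq_odd (t : ℤ) (ht : Even t) (k : ℕ) : Odd (vseq t k) ∧ Odd (vseq t (k+1)) := by
  induction k with
  | zero => exact ⟨by simp [vseq], by simpa [vseq] using ht.add_one⟩
  | succ k ih =>
    refine ⟨ih.2, ?_⟩
    simp only [vseq]
    exact (ht.mul_right _).sub_odd ih.1

lemma vseq_growth (t : ℤ) (l m : ℝ) (hm : 0 < m) (hs : l + m = t) (hp : l * m = 1) (k : ℕ) :
    l * vseq t k ≤ vseq t (k+1) := by
  induction k with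
  | zero => simp [vseq]; linarith
  | succ k ih =>
    simp only [vseq]
    push_cast
    rw [← hs]
    have := mul_le_mul_of_nonneg_left ih hm.le
    have e : m * (l * (vseq t k : ℝ)) = vseq t k := by
      rw [← mul_assoc, mul_comm m l, hp, one_mul]
    rw [e] at this
    linarith

lemma vseq_pow (t : ℤ) (l m : ℝ) (hl : 1 < l) (hm : 0 < m) (hs : l + m = t) (hp : l * m = 1)
    (k : ℕ) : l ^ k ≤ vseq t k := by
  induction k with
  | zero => simp [vseq]
  | succ k ih =>
    have := vseq_growth t l m hm hs hp k
    rw [pow_succ']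
    exact (mul_le_mul_of_nonneg_left ih (by linarith)).trans this

/-- With `A = !![a, b; c, d]` of determinant 1, trace `a + d` even and
`> 2`, `gcd(b, c) = 1`, `λ > 1` the largest eigenvalue of `A`, and `T N` the least positive
integer `t` with `A^t ≡ I (mod N)` entrywise, there exists a strictly increasing sequence of
odd positive integers `N k` tending to infinity with
`T (N k) ≤ 2 log (N k) / log λ + 1` for every `k`. -/
theorem stmt11 (a b c d : ℤ) (hdet : a * d - b * c = 1)
    (heven : Even (a + d)) (htr : 2 < a + d) (hbc : Int.gcd b c = 1)
    (lam : ℝ)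
    (hlam : lam = (((a : ℝ) + d) + Real.sqrt (((a : ℝ) + d) ^ 2 - 4)) / 2)
    (T : ℕ → ℕ)
    (hT : ∀ N : ℕ, 0 < N →
      IsLeast {t : ℕ | 0 < t ∧ ∀ i j : Fin 2,
        (N : ℤ) ∣ (((!![a, b; c, d] : Matrix (Fin 2) (Fin 2) ℤ) ^ t - 1) i j)} (T N)) :
    ∃ Nseq : ℕ → ℕ, StrictMono Nseq ∧ (∀ k, Odd (Nseq k)) ∧ (∀ k, 0 < Nseq k)
      ∧ Filter.Tendsto Nseq Filter.atTop Filter.atTop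
      ∧ ∀ k, (T (Nseq k) : ℝ) ≤ 2 * Real.log (Nseq k) / Real.log lam + 1 := by
  set r := Real.sqrt (((a : ℝ) + d) ^ 2 - 4) with hr
  have htr' : (2:ℝ) < (a:ℝ) + d := by exact_mod_cast htr
  have hr2 : r ^ 2 = ((a : ℝ) + d) ^ 2 - 4 := Real.sq_sqrt (by nlinarith)
  have hr0 : 0 ≤ r := Real.sqrt_nonneg _
  have hl : 1 < lam := by rw [hlam]; linarith
  obtain ⟨m, hmdef⟩ : ∃ m, m = (((a : ℝ) + d) - r) / 2 := ⟨_, rfl⟩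
  have hs : lam + m = ((a + d : ℤ) : ℝ) := by rw [hlam, hmdef]; push_cast; ring
  have hp : lam * m = 1 := by rw [hlam, hmdef]; nlinarith
  have hm : 0 < m := by
    by_contra h
    push Not at h
    nlinarith
  have hpow := vseq_pow (a+d) lam m hl hm hs hp
  have hone : ∀ k, (1:ℝ) ≤ vseq (a+d) k := fun k => (one_le_pow₀ hl.le).trans (hpow k)
  have hposZ : ∀ k, 0 < vseq (a+d) k := fun k => by
    have := hone k
    have h2 : (1:ℤ) ≤ vseq (a+d) k := by exact_mod_cast this
    omega
  have hcast : ∀ k, ((vseq (a+d) k).toNat : ℤ) = vseq (a+d) k :=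
    fun k => Int.toNat_of_nonneg (hposZ k).le
  have hcastR : ∀ k, ((vseq (a+d) k).toNat : ℝ) = vseq (a+d) k := fun k => by
    exact_mod_cast congrArg (Int.cast : ℤ → ℝ) (hcast k)
  have hmono : StrictMono (fun k => (vseq (a+d) k).toNat) := by
    refine strictMono_nat_of_lt_succ fun k => ?_
    have h1 := vseq_growth (a+d) lam m hm hs hp k
    have h2 := hone k
    have h3 : (vseq (a+d) k : ℝ) < vseq (a+d) (k+1) := by nlinarith
    have h4 : vseq (a+d) k < vseq (a+d) (k+1) := by exact_mod_cast h3
    have := hcast k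
    have := hcast (k+1)
    omega
  have hpos : ∀ k, 0 < (vseq (a+d) k).toNat := fun k => by
    have := hposZ k
    omega
  refine ⟨fun k => (vseq (a+d) k).toNat, hmono, ?_, hpos, hmono.tendsto_atTop, ?_⟩
  · intro k
    have := (vseq_odd (a+d) heven k).1
    rw [← hcast k] at this
    exact_mod_cast this
  · intro k
    have hA : (!![a, b; c, d] : Matrix (Fin 2) (Fin 2) ℤ)^2 - (a+d) • !![a, b; c, d] + 1 = 0 := by
      ext i j
      fin_cases i <;> fin_cases j <;> simp [pow_two, Matrix.mul_apply, Fin.sum_univ_two] <;>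
        linarith
    have hle : T ((vseq (a+d) k).toNat) ≤ 2*k+1 := by
      refine (hT _ (hpos k)).2 ⟨by omega, fun i j => ?_⟩
      rw [vseq_mat (a+d) _ hA k, hcast k, Matrix.smul_apply, smul_eq_mul]
      exact dvd_mul_right _ _
    have hleR : (T ((vseq (a+d) k).toNat) : ℝ) ≤ 2*k+1 := by exact_mod_cast hle
    have hlog : 0 < Real.log lam := Real.log_pos hl
    have h5 : k * Real.log lam ≤ Real.log (vseq (a+d) k) := by
      rw [← Real.log_pow]
      exact Real.log_le_log (by positivity) (hpow k)
    have h6 : (2*k : ℝ) ≤ 2 * Real.log ((vseq (a+d) k).toNat) / Real.log lam := by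
      rw [le_div_iff₀ hlog, hcastR k]
      linarith
    exact hleR.trans (by linarith)
end

section
/- Let N and t be positive integers and let V be a complex linear subspace of ℂ^N with dim V ≥ N/t. Then there exists u ∈ V with ‖u‖_{ℓ²} = 1 and ‖u‖_{ℓ^∞} ≥ 1/√t. -/
/-- Let `N, t` be positive integers and `V` a complex linear subspace of
`ℂ^N` with `dim V ≥ N / t`. Then there exists `u ∈ V` with `‖u‖_{ℓ²} = 1` and
`‖u‖_{ℓ∞} ≥ 1 / √t`. (Here `Fin N → ℂ` carries the sup norm, i.e. `‖u‖ = ‖u‖_{ℓ∞}`.) -/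
theorem stmt12 (N t : ℕ) (hN : 0 < N) (ht : 0 < t)
    (V : Submodule ℂ (Fin N → ℂ))
    (hdim : (N : ℝ) / (t : ℝ) ≤ (Module.finrank ℂ V : ℝ)) :
    ∃ u : Fin N → ℂ, u ∈ V ∧ Real.sqrt (∑ j, ‖u j‖ ^ 2) = 1
      ∧ 1 / Real.sqrt t ≤ ‖u‖ := by
  classical
  let e := (WithLp.linearEquiv 2 ℂ (Fin N → ℂ)).symm
  let W : Submodule ℂ (EuclideanSpace ℂ (Fin N)) := V.map (e : (Fin N → ℂ) →ₗ[ℂ] _)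
  have hfr : Module.finrank ℂ W = Module.finrank ℂ V := LinearEquiv.finrank_map_eq e V
  let b := stdOrthonormalBasis ℂ W
  let K : Fin N → ℝ := fun j => ∑ i, ‖(b i : EuclideanSpace ℂ (Fin N)) j‖ ^ 2
  have htR : (0 : ℝ) < t := by exact_mod_cast ht
  have hsum : ∑ j, K j = (Module.finrank ℂ V : ℝ) := by
    simp only [K]
    rw [Finset.sum_comm]
    have : ∀ i, ∑ j, ‖(b i : EuclideanSpace ℂ (Fin N)) j‖ ^ 2 = 1 := by
      intro i
      rw [← EuclideanSpace.norm_sq_eq]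
      have := b.orthonormal.1 i
      rw [Submodule.coe_norm] at this
      rw [this]; norm_num
    simp only [this]
    simp [hfr]
  obtain ⟨j, hj⟩ : ∃ j, 1 / (t : ℝ) ≤ K j := by
    by_contra! h
    have : ∑ j, K j < ∑ _j : Fin N, 1 / (t : ℝ) :=
      Finset.sum_lt_sum_of_nonempty ⟨⟨0, hN⟩, Finset.mem_univ _⟩ (fun j _ => h j)
    rw [hsum] at this
    simp only [Finset.sum_const, Finset.card_univ, Fintype.card_fin, nsmul_eq_mul,
      mul_one_div] at this
    linarith
  have hK : 0 < K j := lt_of_lt_of_le (by positivity) hj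
  let c : EuclideanSpace ℂ (Fin (Module.finrank ℂ W)) :=
    WithLp.toLp 2 fun i => star ((b i : EuclideanSpace ℂ (Fin N)) j)
  let w : W := b.repr.symm c
  have hw : ‖(w : EuclideanSpace ℂ (Fin N))‖ ^ 2 = K j := by
    rw [← Submodule.coe_norm, LinearIsometryEquiv.norm_map, EuclideanSpace.norm_sq_eq]
    simp [c, K]
  have hwj : (w : EuclideanSpace ℂ (Fin N)) j = (K j : ℂ) := by
    have : w = ∑ i, c i • b i := (b.sum_repr_symm c).symm
    rw [this]
    simp [c, K, Complex.conj_mul']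
  have hsq : (0 : ℝ) < √(K j) := Real.sqrt_pos.2 hK
  have hwV : (fun k => (w : EuclideanSpace ℂ (Fin N)) k) ∈ V := by
    obtain ⟨v, hv, hvw⟩ := w.2
    rw [← hvw]
    exact hv
  refine ⟨(((√(K j))⁻¹ : ℝ) : ℂ) • (fun k => (w : EuclideanSpace ℂ (Fin N)) k),
    V.smul_mem _ hwV, ?_, ?_⟩
  · simp only [Pi.smul_apply, norm_smul, mul_pow]
    rw [← Finset.mul_sum, ← EuclideanSpace.norm_sq_eq, hw, Complex.norm_real, Real.norm_eq_abs,
      sq_abs, inv_pow, Real.sq_sqrt hK.le, inv_mul_cancel₀ hK.ne', Real.sqrt_one]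
  · refine le_trans ?_ (norm_le_pi_norm _ j)
    simp only [Pi.smul_apply, norm_smul]
    rw [hwj, Complex.norm_real, Complex.norm_real, Real.norm_of_nonneg (by positivity),
      Real.norm_of_nonneg hK.le, inv_mul_eq_div, Real.div_sqrt, ← Real.sqrt_one,
      ← Real.sqrt_div zero_le_one]
    exact Real.sqrt_le_sqrt (by simpa using hj)
end

section
/- For every l ∈ ℤ, c_{l+N} = c_l, where c_l := Σ_{r=0}^{|b|−1} exp( (2πi/b) · ( d·l²/(2N) − l·r − l·j/N + a·N·r²/2 + a·r·j + a·j/(2N) ) ). -/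
theorem aux_shift1 (g : ℤ → ℂ) (n : ℕ) (hg : ∀ r, g (r + n) = g r) :
    ∑ r ∈ Finset.range n, g ((r : ℤ) + 1) = ∑ r ∈ Finset.range n, g (r : ℤ) := by
  have h1 := Finset.sum_range_succ (fun r : ℕ => g (r : ℤ)) n
  have h2 := Finset.sum_range_succ' (fun r : ℕ => g (r : ℤ)) n
  have h3 := hg 0
  rw [zero_add] at h3
  rw [h1, h3] at h2
  push_cast at h2
  exact (add_right_cancel h2).symm

theorem aux_shift (n : ℕ) (g : ℤ → ℂ) (hg : ∀ r, g (r + n) = g r) (k : ℤ) :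
    ∑ r ∈ Finset.range n, g ((r : ℤ) + k) = ∑ r ∈ Finset.range n, g (r : ℤ) := by
  induction k using Int.induction_on with
  | zero => simp
  | succ i ih =>
    rw [← ih, ← aux_shift1 (fun r => g (r + i)) n (fun r => by
      rw [← hg (r + i)]; congr 1; ring)]
    refine Finset.sum_congr rfl fun r _ => ?_
    congr 1; ring
  | pred i ih =>
    rw [← ih, ← aux_shift1 (fun r => g (r + (-i - 1))) n (fun r => by
      rw [← hg (r + (-i - 1))]; congr 1; ring)]
    refine Finset.sum_congr rfl fun r _ => ?_
    congr 1; ring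

theorem aux_exp (b : ℤ) (hb : b ≠ 0) (x y : ℂ) (m : ℤ) (h : x = y + b * m) :
    Complex.exp ((2 * (Real.pi : ℂ) * Complex.I / (b : ℂ)) * x) =
    Complex.exp ((2 * (Real.pi : ℂ) * Complex.I / (b : ℂ)) * y) := by
  have hb' : (b : ℂ) ≠ 0 := by exact_mod_cast hb
  rw [Complex.exp_eq_exp_iff_exists_int]
  refine ⟨m, ?_⟩
  rw [h]; field_simp



open Complex in
/-- Let `a, b, c, d` be integers with `ad - bc = 1`, `b ≠ 0`, `ab` even,
`cd` even, let `N` be an odd positive integer and `j` an integer. Define, for `l ∈ ℤ`,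
`c_l = Σ_{r=0}^{|b|-1} exp((2πi/b) (d l²/(2N) - l r - l j/N + a N r²/2 + a r j + a j/(2N)))`.
Then `c_{l+N} = c_l` for every `l ∈ ℤ`. -/
theorem stmt13 (a b c d : ℤ) (hb : b ≠ 0) (hdet : a * d - b * c = 1)
    (hab : Even (a * b)) (hcd : Even (c * d))
    (N : ℕ) (hNpos : 0 < N) (hNodd : Odd N) (j : ℤ)
    (cseq : ℤ → ℂ)
    (hcseq : ∀ l : ℤ, cseq l = ∑ r ∈ Finset.range b.natAbs,
      Complex.exp ((2 * (Real.pi : ℂ) * Complex.I / (b : ℂ)) *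
        ((d : ℂ) * (l : ℂ) ^ 2 / (2 * (N : ℂ)) - (l : ℂ) * (r : ℂ)
          - (l : ℂ) * (j : ℂ) / (N : ℂ)
          + (a : ℂ) * (N : ℂ) * (r : ℂ) ^ 2 / 2
          + (a : ℂ) * (r : ℂ) * (j : ℂ)
          + (a : ℂ) * (j : ℂ) / (2 * (N : ℂ))))) :
    ∀ l : ℤ, cseq (l + N) = cseq l := by
  intro l
  have hb' : (b : ℂ) ≠ 0 := by exact_mod_cast hb
  have hN : (N : ℂ) ≠ 0 := by exact_mod_cast hNpos.ne'
  obtain ⟨u, hu⟩ := hab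
  obtain ⟨v, hv⟩ := hcd
  have hu' : (a : ℂ) * b = u + u := by exact_mod_cast hu
  have hv' : (c : ℂ) * d = v + v := by exact_mod_cast hv
  have hdet' : (a : ℂ) * d - b * c = 1 := by exact_mod_cast hdet
  let G : ℤ → ℤ → ℂ := fun l r => Complex.exp ((2 * (Real.pi : ℂ) * Complex.I / (b : ℂ)) *
        ((d : ℂ) * (l : ℂ) ^ 2 / (2 * (N : ℂ)) - (l : ℂ) * (r : ℂ)
          - (l : ℂ) * (j : ℂ) / (N : ℂ)
          + (a : ℂ) * (N : ℂ) * (r : ℂ) ^ 2 / 2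
          + (a : ℂ) * (r : ℂ) * (j : ℂ)
          + (a : ℂ) * (j : ℂ) / (2 * (N : ℂ))))
  have hG : ∀ l, cseq l = ∑ r ∈ Finset.range b.natAbs, G l (r : ℤ) := by
    intro l
    rw [hcseq]
    simp only [G, Int.cast_natCast]
  have hper : ∀ l r, G l (r + b) = G l r := by
    intro l r
    apply aux_exp b hb _ _ (-l + a * N * r + a * j + u * N)
    push_cast
    linear_combination (b * N / 2 : ℂ) * hu'
  have hper' : ∀ l r, G l (r + (b.natAbs : ℤ)) = G l r := by
    intro l r
    rcases Int.natAbs_eq b with h | h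
    · rw [← h]; exact hper l r
    · have h2 : (b.natAbs : ℤ) = -b := by omega
      rw [h2, ← hper l (r + -b)]
      congr 1; ring
  have hsh : ∀ r, G (l + N) (r + d) = G l r := by
    intro r
    apply aux_exp b hb _ _ (c * N * r + c * j + v * N)
    push_cast
    field_simp
    linear_combination (N * (2 * N * r + 2 * j + N * d) : ℂ) * hdet' + (b * N ^ 2 : ℂ) * hv'
  rw [hG, hG, ← aux_shift _ (G (l + N)) (hper' _) d]
  exact Finset.sum_congr rfl fun r _ => hsh r
end

section
/- Let M be a unitary N×N complex matrix, let μ ∈ ℂ and u ∈ ℂ^N satisfy M u = μ u and ‖u‖_{ℓ²} = 1, and let T be a positive integer. Suppose there are constants C > 0 and λ > 1 such that ‖M^j‖_{ℓ¹→ℓ^∞} ≤ C·λ^{j/2}/√N for every integer j with 1 ≤ j ≤ T − 1. Then ‖u‖²_{ℓ^∞} ≤ 1/T + (2C/√N)·Σ_{j=1}^{T−1} λ^{j/2}. -/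
open scoped ENNReal

/-- The operator norm of a complex `N × N` matrix `B`, acting by matrix–vector
multiplication, viewed as a linear map from `(ℂ^N, ‖·‖_{ℓᵖ})` to `(ℂ^N, ‖·‖_{ℓ^q})`. -/
noncomputable def matOpNorm {N : ℕ} (p q : ℝ≥0∞) [Fact (1 ≤ p)] [Fact (1 ≤ q)]
    (B : Matrix (Fin N) (Fin N) ℂ) : ℝ :=
  ‖LinearMap.toContinuousLinearMap
    (((WithLp.linearEquiv q ℂ (Fin N → ℂ)).symm.toLinearMap.comp
        B.mulVecLin).comp
      (WithLp.linearEquiv p ℂ (Fin N → ℂ)).toLinearMap :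
      PiLp p (fun _ : Fin N => ℂ) →ₗ[ℂ] PiLp q (fun _ : Fin N => ℂ))‖

open scoped InnerProductSpace

lemma aux_abs {H : Type*} [NormedAddCommGroup H] [InnerProductSpace ℂ H]
    (A : H →L[ℂ] H) (hA : ∀ x y, ⟪A x, A y⟫_ℂ = ⟪x, y⟫_ℂ) (e u : H) (he : ‖e‖ = 1)
    (hu : ‖u‖ = 1) (hAu : A u = u) (T : ℕ) (hT : 0 < T) (b : ℕ → ℝ)
    (hb0 : ∀ j, 0 ≤ b j)
    (hb : ∀ j, 1 ≤ j → j ≤ T - 1 → ‖⟪e, (A ^ j) e⟫_ℂ‖ ≤ b j) :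
    ‖⟪e, u⟫_ℂ‖ ^ 2 ≤ 1 / (T : ℝ) + 2 * ∑ j ∈ Finset.Icc 1 (T - 1), b j := by
  set S := ∑ j ∈ Finset.Icc 1 (T - 1), b j with hS
  have hS0 : 0 ≤ S := Finset.sum_nonneg fun j _ => hb0 j
  have hnorm : ∀ x, ‖A x‖ = ‖x‖ := fun x => by
    rw [@norm_eq_sqrt_re_inner ℂ, @norm_eq_sqrt_re_inner ℂ _ _ _ _ x, hA]
  let w : ℕ → H := fun t => ∑ j ∈ Finset.range t, (A ^ j) e
  have hsucc : ∀ t, w (t + 1) = e + A (w t) := fun t => by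
    simp only [w]
    rw [Finset.sum_range_succ', map_sum, add_comm]
    simp [pow_succ']
  have hin : ∀ t, ⟪w t, u⟫_ℂ = t * ⟪e, u⟫_ℂ := by
    intro t
    induction t with
    | zero => simp [w]
    | succ t ih =>
      have h1 : ⟪A (w t), u⟫_ℂ = ⟪w t, u⟫_ℂ := by
        have := hA (w t) u
        rwa [hAu] at this
      rw [hsucc, inner_add_left, h1, ih]
      push_cast
      ring
  have hcross : ∀ t, t + 1 ≤ T → ‖⟪e, A (w t)⟫_ℂ‖ ≤ S := by
    intro t ht
    have h1 : ⟪e, A (w t)⟫_ℂ = ∑ j ∈ Finset.Icc 1 t, ⟪e, (A ^ j) e⟫_ℂ := by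
      simp only [w]
      rw [map_sum, inner_sum, Finset.range_eq_Ico, ← Finset.Ico_add_one_right_eq_Icc,
        ← Finset.sum_Ico_add' (fun j => ⟪e, (A ^ j) e⟫_ℂ) 0 t 1]
      simp [pow_succ']
    rw [h1]
    calc _ ≤ ∑ j ∈ Finset.Icc 1 t, ‖⟪e, (A ^ j) e⟫_ℂ‖ := norm_sum_le _ _
      _ ≤ ∑ j ∈ Finset.Icc 1 t, b j := Finset.sum_le_sum fun j hj => by
          rw [Finset.mem_Icc] at hj
          exact hb j hj.1 (by omega)
      _ ≤ S := Finset.sum_le_sum_of_subset_of_nonneg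
          (Finset.Icc_subset_Icc_right (by omega)) fun j _ _ => hb0 j
  have hw : ∀ t, t ≤ T → ‖w t‖ ^ 2 ≤ t * (1 + 2 * S) := by
    intro t
    induction t with
    | zero => simp [w]
    | succ t ih =>
      intro ht
      have h1 := ih (by omega)
      have h2 := (Complex.re_le_norm _).trans (hcross t ht)
      rw [hsucc, @norm_add_sq ℂ, hnorm, he]
      simp only [RCLike.re_eq_complex_re]
      push_cast
      linarith
  have h1 : (T : ℝ) * ‖⟪e, u⟫_ℂ‖ ≤ ‖w T‖ := by
    have := norm_inner_le_norm (𝕜 := ℂ) (w T) u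
    rw [hin, hu, mul_one, norm_mul] at this
    simpa using this
  have hT1 : (1 : ℝ) ≤ T := by exact_mod_cast hT
  have h2 : ((T : ℝ) * ‖⟪e, u⟫_ℂ‖) ^ 2 ≤ T * (1 + 2 * S) :=
    (pow_le_pow_left₀ (by positivity) h1 2).trans (hw T le_rfl)
  have h3 : (T : ℝ) * ‖⟪e, u⟫_ℂ‖ ^ 2 ≤ 1 + 2 * S := by
    refine le_of_mul_le_mul_left ?_ (show (0 : ℝ) < T by linarith)
    nlinarith
  have h4 : ‖⟪e, u⟫_ℂ‖ ^ 2 ≤ (1 + 2 * S) / T := by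
    rw [le_div_iff₀ (by linarith)]; linarith
  have h5 : 2 * S / T ≤ 2 * S := div_le_self (by linarith) hT1
  rw [add_div] at h4
  linarith

lemma aux_entry {N : ℕ} (B : Matrix (Fin N) (Fin N) ℂ) (i k : Fin N) :
    ‖B i k‖ ≤ matOpNorm 1 ⊤ B := by
  unfold matOpNorm
  set L := LinearMap.toContinuousLinearMap
    (((WithLp.linearEquiv ⊤ ℂ (Fin N → ℂ)).symm.toLinearMap.comp
        B.mulVecLin).comp
      (WithLp.linearEquiv 1 ℂ (Fin N → ℂ)).toLinearMap :
      PiLp 1 (fun _ : Fin N => ℂ) →ₗ[ℂ] PiLp ⊤ (fun _ : Fin N => ℂ)) with hL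
  have h1 := L.le_opNorm (WithLp.toLp 1 (Pi.single k 1))
  have h2 : ‖(WithLp.toLp 1 (Pi.single k 1) : PiLp 1 (fun _ : Fin N => ℂ))‖ = 1 := by
    rw [PiLp.norm_toLp_single]; simp
  rw [h2, mul_one] at h1
  refine le_trans ?_ h1
  have h3 := PiLp.norm_apply_le (L (WithLp.toLp 1 (Pi.single k 1))) i
  refine le_trans (le_of_eq ?_) h3
  simp [hL]

/-- Let `M` be a unitary `N × N` complex matrix, `μ ∈ ℂ`, `u ∈ ℂ^N` an
eigenvector: `M u = μ u`, with `‖u‖_{ℓ²} = 1`, and let `T` be a positive integer. Suppose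
`C > 0`, `λ > 1` and `‖M^j‖_{ℓ¹→ℓ∞} ≤ C λ^{j/2} / √N` for all `1 ≤ j ≤ T - 1`. Then
`‖u‖²_{ℓ∞} ≤ 1/T + (2C/√N) Σ_{j=1}^{T-1} λ^{j/2}`. (Here `Fin N → ℂ` carries the sup norm,
so `‖u‖ = ‖u‖_{ℓ∞}`.) -/
theorem stmt15 (N : ℕ) (hN : 0 < N) (M : Matrix (Fin N) (Fin N) ℂ)
    (hM : M ∈ Matrix.unitaryGroup (Fin N) ℂ)
    (μ : ℂ) (u : Fin N → ℂ) (hu : M.mulVec u = μ • u)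
    (hu2 : Real.sqrt (∑ j, ‖u j‖ ^ 2) = 1)
    (T : ℕ) (hT : 0 < T) (C lam : ℝ) (hC : 0 < C) (hlam : 1 < lam)
    (hbound : ∀ j : ℕ, 1 ≤ j → j ≤ T - 1 →
      matOpNorm 1 ⊤ (M ^ j) ≤ C * lam ^ ((j : ℝ) / 2) / Real.sqrt N) :
    ‖u‖ ^ 2 ≤ 1 / (T : ℝ)
      + (2 * C / Real.sqrt N) * ∑ j ∈ Finset.Icc 1 (T - 1), lam ^ ((j : ℝ) / 2) := by
  have hsum : ∑ j, ‖u j‖ ^ 2 = 1 := by simpa using hu2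
  have : Nonempty (Fin N) := ⟨⟨0, hN⟩⟩
  obtain ⟨k, hk⟩ : ∃ k, ‖u‖ = ‖u k‖ := by
    obtain ⟨k, -, hk⟩ := Finset.exists_mem_eq_sup Finset.univ Finset.univ_nonempty
      (fun i => ‖u i‖₊)
    refine ⟨k, ?_⟩
    rw [Pi.norm_def, hk]; rfl
  let U : EuclideanSpace ℂ (Fin N) := WithLp.toLp 2 u
  let e : EuclideanSpace ℂ (Fin N) := EuclideanSpace.single k 1
  let L := Matrix.toEuclideanCLM (n := Fin N) (𝕜 := ℂ) M
  have hU : ‖U‖ = 1 := by rw [EuclideanSpace.norm_eq]; exact hu2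
  have he : ‖e‖ = 1 := by simp [e]
  have hLU : L U = μ • U := by
    simp only [L, U, Matrix.toEuclideanCLM_toLp, hu, WithLp.toLp_smul]
  have hLm : star L * L = 1 := by
    simp only [L]
    rw [← map_star, ← map_mul, (Matrix.mem_unitaryGroup_iff'.1 hM), map_one]
  have hLi : ∀ x y, ⟪L x, L y⟫_ℂ = ⟪x, y⟫_ℂ := fun x y => by
    rw [← ContinuousLinearMap.adjoint_inner_right]
    have := congrArg (fun F => F y) hLm
    simp only [ContinuousLinearMap.star_eq_adjoint, ContinuousLinearMap.mul_apply,
      ContinuousLinearMap.one_apply] at this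
    rw [this]
  have hμ : ‖μ‖ = 1 := by
    have h1 : ‖L U‖ = ‖U‖ := by
      rw [@norm_eq_sqrt_re_inner ℂ, @norm_eq_sqrt_re_inner ℂ _ _ _ _ U, hLi]
    rw [hLU, norm_smul, hU, mul_one] at h1
    exact h1
  have hμ' : (starRingEnd ℂ) μ * μ = 1 := by
    rw [Complex.conj_mul', hμ]; simp
  have key := aux_abs ((starRingEnd ℂ) μ • L) (fun x y => by
      simp only [ContinuousLinearMap.smul_apply, inner_smul_left, inner_smul_right, hLi,
        Complex.conj_conj]
      rw [← mul_assoc, hμ', one_mul]) e U he hU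
    (by rw [ContinuousLinearMap.smul_apply, hLU, smul_smul, hμ', one_smul]) T hT
    (fun j => C * lam ^ ((j : ℝ) / 2) / Real.sqrt N) (fun j => by positivity)
    (fun j h1 h2 => by
      refine le_trans ?_ ((aux_entry (M ^ j) k k).trans (hbound j h1 h2))
      rw [smul_pow, ContinuousLinearMap.smul_apply, inner_smul_right, norm_mul, norm_pow,
        RCLike.norm_conj, hμ, one_pow, one_mul]
      simp only [L, e]
      rw [← map_pow, EuclideanSpace.inner_single_left, Matrix.ofLp_toEuclideanCLM]
      simp [Matrix.ofLp_toEuclideanCLM, -map_pow])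
  have hin : ⟪e, U⟫_ℂ = u k := by simp [e, U, EuclideanSpace.inner_single_left, Matrix.ofLp_toEuclideanCLM]
  rw [hin, ← hk] at key
  refine key.trans (le_of_eq ?_)
  rw [Finset.mul_sum, Finset.mul_sum]
  congr 1
  refine Finset.sum_congr rfl fun j _ => ?_
  ring
end
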